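/- arXiv:2601.19848 — 2 statements merged into one kernel-verified Lean document; each statement's English description precedes it below -/
import Mathlib

section
/- For every k ≥ 1: (a) W_opt(n, k, 2) ≥ 3 for all n, and (b) there exists n (in fact n = 4k works) with W_opt(n, k, 2) = 3. Hence the minimum over all blocklengths n of W_opt(n, k, 2) equals 3. -/
open scoped Classical

noncomputable section

/-- Pauli strings modulo phase, indexed by a finite type. -/
abbrev PauliT (ι : Type) : Type := ι → ZMod 2 × ZMod 2

abbrev Pauli (n : ℕ) : Type := PauliT (Fin n)

variable {ι : Type} [Fintype ι]

/-- Weight of a Pauli string. -/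
def wt (v : PauliT ι) : ℕ := (Finset.univ.filter fun i => v i ≠ 0).card

/-- Support of a Pauli string. -/
def suppF (v : PauliT ι) : Finset ι := Finset.univ.filter fun i => v i ≠ 0

/-- Symplectic form encoding commutation. -/
def sympl (u v : PauliT ι) : ZMod 2 :=
  ∑ i, ((u i).1 * (v i).2 + (u i).2 * (v i).1)

/-- `G` is a stabilizer group (isotropic subspace). -/
def IsStabilizer (G : Submodule (ZMod 2) (PauliT ι)) : Prop :=
  ∀ u ∈ G, ∀ v ∈ G, sympl u v = 0

/-- Membership in the symplectic dual `G^⊥`. -/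
def inDual (G : Submodule (ZMod 2) (PauliT ι)) (v : PauliT ι) : Prop :=
  ∀ g ∈ G, sympl v g = 0

/-- Distance: minimum weight of an element of `G^⊥ \ G`, `⊤` if none exists. -/
def distG (G : Submodule (ZMod 2) (PauliT ι)) : ℕ∞ :=
  sInf ((fun v => (wt v : ℕ∞)) '' {v | inDual G v ∧ v ∉ G})

/-- `g` is an `𝔽₂`-basis (indexed family) of `G`. -/
def IsBasisFam {r : ℕ} (G : Submodule (ZMod 2) (PauliT ι)) (g : Fin r → PauliT ι) : Prop :=
  LinearIndependent (ZMod 2) g ∧ Submodule.span (ZMod 2) (Set.range g) = G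

/-- The weight of a stabilizer group: optimal maximum generator weight over bases. -/
def Wgt (G : Submodule (ZMod 2) (PauliT ι)) : ℕ∞ :=
  ⨅ (r : ℕ) (g : Fin r → PauliT ι) (_ : IsBasisFam G g),
    Finset.univ.sup fun i => (wt (g i) : ℕ∞)

/-- Optimal weight over all `[[n,k,d]]` stabilizer codes. -/
def Wopt (n k : ℕ) (d : ℕ∞) : ℕ∞ :=
  ⨅ (G : Submodule (ZMod 2) (Pauli n))
    (_ : IsStabilizer G ∧ Module.finrank (ZMod 2) ↥G = n - k ∧ distG G = d),
    Wgt G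

/-- Weight enumerator: number of elements of `G` of weight `j`. -/
def Aj (G : Submodule (ZMod 2) (PauliT ι)) (j : ℕ) : ℕ :=
  Nat.card {g : PauliT ι // g ∈ G ∧ wt g = j}

/-- A weight-optimal generating set. -/
def IsWeightOptimalBasis {r : ℕ} (G : Submodule (ZMod 2) (PauliT ι))
    (g : Fin r → PauliT ι) : Prop :=
  IsBasisFam G g ∧ Monotone (fun i => wt (g i)) ∧
    ∀ h : Fin r → PauliT ι, IsBasisFam G h → Monotone (fun i => wt (h i)) →
      ∀ i, wt (g i) ≤ wt (h i)

/-- Set of average generator weights over all bases of `G`. -/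
def WavgSet (G : Submodule (ZMod 2) (PauliT ι)) : Set ℚ :=
  {x | ∃ (r : ℕ) (g : Fin r → PauliT ι), IsBasisFam G g ∧
        x = (∑ i, (wt (g i) : ℚ)) / (r : ℚ)}

/-- Splitting of Pauli strings along a bipartition given by a predicate. -/
def splitEquiv (p : ι → Prop) :
    PauliT ι ≃ₗ[ZMod 2] PauliT {x // p x} × PauliT {x // ¬ p x} :=
  (LinearEquiv.funCongrLeft (ZMod 2) (ZMod 2 × ZMod 2) (Equiv.sumCompl p)).trans
    (LinearEquiv.sumArrowLequivProdArrow _ _ _ _)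

/-- Tensor product of subspaces along a bipartition. -/
def tensorAlong (p : ι → Prop)
    (GA : Submodule (ZMod 2) (PauliT {x // p x}))
    (GB : Submodule (ZMod 2) (PauliT {x // ¬ p x})) :
    Submodule (ZMod 2) (PauliT ι) :=
  (GA.prod GB).comap (splitEquiv p).toLinearMap

/-- Decomposability as a tensor product over a nontrivial bipartition. -/
def Decomposable (G : Submodule (ZMod 2) (PauliT ι)) : Prop :=
  ∃ p : ι → Prop, (∃ x, p x) ∧ (∃ x, ¬ p x) ∧
    ∃ (GA : Submodule (ZMod 2) (PauliT {x // p x}))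
      (GB : Submodule (ZMod 2) (PauliT {x // ¬ p x})),
      G = tensorAlong p GA GB

/-- Identification of `Pauli (n₁+n₂)` with `Pauli n₁ × Pauli n₂`. -/
def pauliSumEquiv (n₁ n₂ : ℕ) :
    Pauli (n₁ + n₂) ≃ₗ[ZMod 2] Pauli n₁ × Pauli n₂ :=
  (LinearEquiv.funCongrLeft (ZMod 2) (ZMod 2 × ZMod 2) finSumFinEquiv).trans
    (LinearEquiv.sumArrowLequivProdArrow _ _ _ _)

/-- Tensor product of stabilizer subspaces on `n₁` and `n₂` qubits. -/
def tensorFin {n₁ n₂ : ℕ} (G₁ : Submodule (ZMod 2) (Pauli n₁))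
    (G₂ : Submodule (ZMod 2) (Pauli n₂)) :
    Submodule (ZMod 2) (Pauli (n₁ + n₂)) :=
  (G₁.prod G₂).comap (pauliSumEquiv n₁ n₂).toLinearMap

/-!
Lower bound: let `G` be a stabilizer group of distance at least two generated by strings of weight
at most two, and let `v ∈ G^⊥`. For each site `i`, the group `G` contains a restriction of `v` to a
set of sites containing `i`. Either all generators commute with `v i` at `i`, and then the
single-site restriction is in `G^⊥`, hence in `G`; or there are generators `s`, `u` such that `s i`
anticommutes with both `v i` and `u i`. As `s` and `u` commute, they share a two-site support
`{i, j}`, on which `v` agrees with `u` or `u + s`. Adding to `v` such a restriction at a site of its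
support lowers its weight, so `G^⊥ \ G` has no element of minimal weight: it is empty, and the
distance of `G` is `⊤`.

Upper bound: `k` disjoint copies of a `[[4,1,2;3]]` code.
-/

section SiteForm

/-- The symplectic form of a single qubit: `0` if the two Pauli matrices commute, `1` if they
anticommute. The form `sympl` is its sum over all sites. -/
def siteForm (p q : ZMod 2 × ZMod 2) : ZMod 2 := p.1 * q.2 + p.2 * q.1

theorem siteForm_zero_right (p : ZMod 2 × ZMod 2) : siteForm p 0 = 0 := by simp [siteForm]

theorem siteForm_comm (p q : ZMod 2 × ZMod 2) : siteForm p q = siteForm q p := by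
  unfold siteForm
  ring

theorem ne_zero_of_siteForm_ne_zero :
    ∀ {p q : ZMod 2 × ZMod 2}, siteForm p q ≠ 0 → p ≠ 0 ∧ q ≠ 0 := by
  decide

theorem add_siteForm_smul_eq_of_siteForm_ne_zero : ∀ {p q r : ZMod 2 × ZMod 2},
    siteForm p q ≠ 0 → siteForm q r ≠ 0 → r + siteForm p r • q = p := by
  decide

theorem sympl_eq_sum_siteForm (u v : PauliT ι) : sympl u v = ∑ i, siteForm (u i) (v i) := rfl

theorem sympl_comm (u v : PauliT ι) : sympl u v = sympl v u := by
  simp only [sympl_eq_sum_siteForm, siteForm_comm]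

theorem sympl_eq_sum_of_forall_notMem {T : Finset ι} {g : PauliT ι} (hg : ∀ i ∉ T, g i = 0)
    (v : PauliT ι) : sympl v g = ∑ i ∈ T, siteForm (v i) (g i) :=
  (Finset.sum_subset T.subset_univ fun i _ hi => by
    rw [← siteForm, hg i hi, siteForm_zero_right]).symm

theorem sympl_single_left (i : ι) (p : ZMod 2 × ZMod 2) (v : PauliT ι) :
    sympl (Pi.single i p) v = siteForm p (v i) := by
  rw [sympl_comm, sympl_eq_sum_of_forall_notMem (T := {i}) (by simp +contextual)]
  simp [siteForm_comm]

/-- The symplectic form `sympl` as a bilinear form. -/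
def symplForm : LinearMap.BilinForm (ZMod 2) (PauliT ι) :=
  LinearMap.mk₂ (ZMod 2) sympl
    (fun u u' v => by simp only [sympl, Pi.add_apply, Prod.fst_add, Prod.snd_add, add_mul,
      Finset.sum_add_distrib]; ring)
    (fun c u v => by simp only [sympl, Pi.smul_apply, Prod.smul_fst, Prod.smul_snd, smul_eq_mul,
      Finset.mul_sum, mul_add, mul_assoc])
    (fun u v v' => by simp only [sympl, Pi.add_apply, Prod.fst_add, Prod.snd_add, mul_add,
      Finset.sum_add_distrib]; ring)
    (fun c u v => by simp only [sympl, Pi.smul_apply, Prod.smul_fst, Prod.smul_snd, smul_eq_mul,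
      Finset.mul_sum, mul_add, mul_left_comm])

theorem sympl_zero_right (v : PauliT ι) : sympl v 0 = 0 := map_zero (symplForm v)

theorem sympl_add_left (u v w : PauliT ι) : sympl (u + v) w = sympl u w + sympl v w :=
  LinearMap.map_add₂ symplForm u v w

end SiteForm

section Weight

theorem mem_suppF {v : PauliT ι} {i : ι} : i ∈ suppF v ↔ v i ≠ 0 := by
  simp [suppF]

theorem eq_zero_of_notMem_of_wt_le_card {T : Finset ι} {v : PauliT ι} (hT : ∀ i ∈ T, v i ≠ 0)
    (hv : wt v ≤ T.card) {i : ι} (hi : i ∉ T) : v i = 0 := by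
  have hsupp : T = suppF v :=
    Finset.eq_of_subset_of_card_le (fun j hj => mem_suppF.2 (hT j hj)) hv
  simpa [hsupp, mem_suppF] using hi

theorem wt_le_card {T : Finset ι} {v : PauliT ι} (hv : ∀ i ∉ T, v i = 0) : wt v ≤ T.card :=
  Finset.card_le_card fun _ hi => not_imp_comm.1 (hv _) (mem_suppF.1 hi)

theorem wt_single_le_one (i : ι) (p : ZMod 2 × ZMod 2) : wt (Pi.single i p : PauliT ι) ≤ 1 :=
  wt_le_card (T := {i}) (by simp +contextual)

theorem wt_add_lt {v g : PauliT ι} {i : ι} (hi : v i ≠ 0) (hgi : g i = v i)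
    (hg : ∀ j, g j = v j ∨ g j = 0) : wt (v + g) < wt v := by
  have hsub : suppF (v + g) ⊆ suppF v := by
    intro j hj
    refine mem_suppF.2 fun hvj => mem_suppF.1 hj ?_
    rcases hg j with h | h <;> simp [h, hvj]
  have hi' : i ∉ suppF (v + g) := fun h =>
    mem_suppF.1 h (by rw [Pi.add_apply, hgi, CharTwo.add_self_eq_zero])
  exact Finset.card_lt_card ((Finset.ssubset_iff_of_subset hsub).2 ⟨i, mem_suppF.2 hi, hi'⟩)

end Weight

section Distance

variable {G : Submodule (ZMod 2) (PauliT ι)} {S : Set (PauliT ι)} {v g : PauliT ι}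

theorem inDual_span_iff :
    inDual (Submodule.span (ZMod 2) S) v ↔ ∀ s ∈ S, sympl v s = 0 :=
  Submodule.span_le (p := LinearMap.ker (symplForm v))

theorem isStabilizer_span (hS : ∀ s ∈ S, ∀ t ∈ S, sympl s t = 0) :
    IsStabilizer (Submodule.span (ZMod 2) S) := by
  intro u hu
  refine inDual_span_iff.2 fun t ht => ?_
  rw [sympl_comm]
  exact inDual_span_iff.2 (hS t ht) u hu

/-- `v` is a nontrivial logical operator of the stabilizer group `G`, i.e. `v ∈ G^⊥ \ G`. -/
def IsLogical (G : Submodule (ZMod 2) (PauliT ι)) (v : PauliT ι) : Prop :=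
  inDual G v ∧ v ∉ G

theorem IsLogical.distG_le (hv : IsLogical G v) : distG G ≤ wt v :=
  sInf_le ⟨v, hv, rfl⟩

theorem isLogical_of_sympl_ne_zero {u : PauliT ι} (hu : inDual G u) (hv : inDual G v)
    (huv : sympl u v ≠ 0) : IsLogical G v :=
  ⟨hv, fun h => huv (hu v h)⟩

theorem le_distG_iff {d : ℕ∞} : d ≤ distG G ↔ ∀ v, IsLogical G v → d ≤ wt v :=
  le_sInf_iff.trans Set.forall_mem_image

theorem exists_isLogical_wt_eq_distG (hG : distG G ≠ ⊤) :
    ∃ v, IsLogical G v ∧ wt v = distG G := by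
  have hne : ((fun v : PauliT ι => (wt v : ℕ∞)) '' {v | IsLogical G v}).Nonempty :=
    Set.nonempty_iff_ne_empty.2 fun hempty => hG ((congrArg sInf hempty).trans sInf_empty)
  exact csInf_mem hne

theorem mem_of_inDual_of_wt_lt (hv : inDual G v) (hwt : wt v < distG G) : v ∈ G :=
  not_not.1 fun hvG => hwt.not_ge (IsLogical.distG_le ⟨hv, hvG⟩)

theorem IsLogical.add_mem (hG : IsStabilizer G) (hv : IsLogical G v) (hg : g ∈ G) :
    IsLogical G (v + g) := by
  refine ⟨fun u hu => ?_, fun hvg => hv.2 ((G.add_mem_iff_left hg).1 hvg)⟩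
  rw [sympl_add_left, hv.1 u hu, hG g hg u hu, add_zero]

theorem single_mem_of_two_le_distG (hd : 2 ≤ distG (Submodule.span (ZMod 2) S)) {i : ι}
    {p : ZMod 2 × ZMod 2} (hp : ∀ s ∈ S, siteForm p (s i) = 0) :
    Pi.single i p ∈ Submodule.span (ZMod 2) S := by
  have hdual : inDual (Submodule.span (ZMod 2) S) (Pi.single i p) :=
    inDual_span_iff.2 fun s hs => (sympl_single_left i p s).trans (hp s hs)
  refine mem_of_inDual_of_wt_lt hdual (lt_of_lt_of_le ?_ hd)
  exact_mod_cast (wt_single_le_one i p).trans_lt one_lt_two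

theorem two_le_distG_span
    (hS : ∀ (i : ι) (p : ZMod 2 × ZMod 2), (∀ s ∈ S, siteForm p (s i) = 0) → p = 0) :
    2 ≤ distG (Submodule.span (ZMod 2) S) := by
  refine le_distG_iff.2 fun v hv => ?_
  by_contra! hwt
  have hwt : wt v ≤ 1 := Nat.le_of_lt_succ (by exact_mod_cast hwt)
  refine hv.2 ?_
  suffices hzero : v = 0 by simp [hzero]
  by_contra hne
  obtain ⟨i, hi⟩ := Function.ne_iff.1 hne
  have hoff : ∀ j ∉ ({i} : Finset ι), v j = 0 := fun j =>
    eq_zero_of_notMem_of_wt_le_card (by simpa using hi) hwt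
  refine hi (hS i (v i) fun s hs => ?_)
  have hvs := inDual_span_iff.1 hv.1 s hs
  rwa [sympl_comm, sympl_eq_sum_of_forall_notMem hoff, Finset.sum_singleton, siteForm_comm] at hvs

end Distance

section LowerBound

variable {S : Set (PauliT ι)} {s u v : PauliT ι}

theorem exists_ne_siteForm_ne_zero (hsu : sympl s u = 0) {i : ι} (hi : siteForm (s i) (u i) ≠ 0) :
    ∃ j ≠ i, siteForm (s j) (u j) ≠ 0 := by
  by_contra! h
  rw [sympl_eq_sum_siteForm, Fintype.sum_eq_single i h] at hsu
  exact hi hsu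

theorem exists_add_smul_eq_or_eq_zero (hs : wt s ≤ 2) (hu : wt u ≤ 2) (hsu : sympl s u = 0)
    (hvs : sympl v s = 0) (hvu : sympl v u = 0) {i : ι} (hvsi : siteForm (v i) (s i) ≠ 0)
    (hsui : siteForm (s i) (u i) ≠ 0) :
    ∃ c : ZMod 2, (u + c • s) i = v i ∧ ∀ j, (u + c • s) j = v j ∨ (u + c • s) j = 0 := by
  obtain ⟨j, hji, hsuj⟩ := exists_ne_siteForm_ne_zero hsu hsui
  have hcard : ({i, j} : Finset ι).card = 2 := Finset.card_pair hji.symm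
  obtain ⟨hsi, hui⟩ := ne_zero_of_siteForm_ne_zero hsui
  obtain ⟨hsj, huj⟩ := ne_zero_of_siteForm_ne_zero hsuj
  have hs_off : ∀ l ∉ ({i, j} : Finset ι), s l = 0 := fun l =>
    eq_zero_of_notMem_of_wt_le_card (by simp [hsi, hsj]) (hs.trans_eq hcard.symm)
  have hu_off : ∀ l ∉ ({i, j} : Finset ι), u l = 0 := fun l =>
    eq_zero_of_notMem_of_wt_le_card (by simp [hui, huj]) (hu.trans_eq hcard.symm)
  rw [sympl_eq_sum_of_forall_notMem hs_off, Finset.sum_pair hji.symm, CharTwo.add_eq_zero] at hvs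
  rw [sympl_eq_sum_of_forall_notMem hu_off, Finset.sum_pair hji.symm, CharTwo.add_eq_zero] at hvu
  have hagree_i : u i + siteForm (v i) (u i) • s i = v i :=
    add_siteForm_smul_eq_of_siteForm_ne_zero hvsi hsui
  have hagree_j : u j + siteForm (v i) (u i) • s j = v j :=
    hvu ▸ add_siteForm_smul_eq_of_siteForm_ne_zero (hvs ▸ hvsi) hsuj
  refine ⟨siteForm (v i) (u i), hagree_i, fun l => ?_⟩
  by_cases hl : l ∈ ({i, j} : Finset ι)
  · rcases Finset.mem_insert.1 hl with rfl | hl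
    · exact .inl hagree_i
    · exact .inl (Finset.mem_singleton.1 hl ▸ hagree_j)
  · exact .inr (by simp [hs_off l hl, hu_off l hl])

theorem exists_mem_span_eq_or_eq_zero (hwt : ∀ s ∈ S, wt s ≤ 2)
    (hS : IsStabilizer (Submodule.span (ZMod 2) S)) (hd : 2 ≤ distG (Submodule.span (ZMod 2) S))
    (hv : inDual (Submodule.span (ZMod 2) S) v) (i : ι) :
    ∃ g ∈ Submodule.span (ZMod 2) S, g i = v i ∧ ∀ j, g j = v j ∨ g j = 0 := by
  by_cases hcomm : ∀ s ∈ S, siteForm (v i) (s i) = 0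
  · refine ⟨Pi.single i (v i), single_mem_of_two_le_distG hd hcomm, Pi.single_eq_same .., ?_⟩
    intro j
    rcases eq_or_ne j i with rfl | hj
    · exact .inl (Pi.single_eq_same ..)
    · exact .inr (Pi.single_eq_of_ne hj _)
  push Not at hcomm
  obtain ⟨s, hs, hvs⟩ := hcomm
  obtain ⟨u, hu, hsu⟩ : ∃ u ∈ S, siteForm (s i) (u i) ≠ 0 := by
    by_contra! h
    have hvs' := hv _ (single_mem_of_two_le_distG hd h)
    rw [sympl_comm, sympl_single_left, siteForm_comm] at hvs'
    exact hvs hvs'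
  have hs' := Submodule.subset_span (R := ZMod 2) hs
  have hu' := Submodule.subset_span (R := ZMod 2) hu
  obtain ⟨c, hc⟩ := exists_add_smul_eq_or_eq_zero (hwt s hs) (hwt u hu) (hS s hs' u hu')
    (hv s hs') (hv u hu') hvs hsu
  exact ⟨u + c • s, add_mem hu' (Submodule.smul_mem _ c hs'), hc⟩

theorem distG_span_eq_top (hwt : ∀ s ∈ S, wt s ≤ 2)
    (hS : IsStabilizer (Submodule.span (ZMod 2) S)) (hd : 2 ≤ distG (Submodule.span (ZMod 2) S)) :
    distG (Submodule.span (ZMod 2) S) = ⊤ := by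
  by_contra htop
  obtain ⟨v, hv, hmin⟩ := exists_isLogical_wt_eq_distG htop
  have hne : v ≠ 0 := fun h => hv.2 (h ▸ zero_mem _)
  obtain ⟨i, hi⟩ := Function.ne_iff.1 hne
  obtain ⟨g, hg, hgi, hgv⟩ := exists_mem_span_eq_or_eq_zero hwt hS hd hv.1 i
  have hle : wt v ≤ wt (v + g) := by exact_mod_cast hmin.trans_le (hv.add_mem hS hg).distG_le
  exact hle.not_gt (wt_add_lt hi hgi hgv)

theorem three_le_Wgt {G : Submodule (ZMod 2) (PauliT ι)} (hG : IsStabilizer G)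
    (hd : 2 ≤ distG G) (htop : distG G ≠ ⊤) : 3 ≤ Wgt G := by
  refine le_iInf fun r => le_iInf₂ fun g hg => ?_
  obtain ⟨-, rfl⟩ := hg
  by_contra! hlt
  have hwt : ∀ i, wt (g i) ≤ 2 := fun i => by
    have h3 : (wt (g i) : ℕ∞) < 3 := (Finset.le_sup (Finset.mem_univ i)).trans_lt hlt
    exact Nat.le_of_lt_succ (by exact_mod_cast h3)
  exact htop (distG_span_eq_top (Set.forall_mem_range.2 hwt) hG hd)

theorem three_le_Wopt (n k : ℕ) {d : ℕ∞} (hd : 2 ≤ d) (htop : d ≠ ⊤) : 3 ≤ Wopt n k d := by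
  refine le_iInf₂ fun G hG => ?_
  obtain ⟨hstab, -, rfl⟩ := hG
  exact three_le_Wgt hstab hd htop

end LowerBound

section Basis

variable {α : Type} {G : Submodule (ZMod 2) (PauliT α)} {r : ℕ} {g : Fin r → PauliT α}

theorem IsBasisFam.finrank_eq (hg : IsBasisFam G g) : Module.finrank (ZMod 2) G = r := by
  rw [← hg.2, finrank_span_eq_card hg.1, Fintype.card_fin]

theorem exists_isBasisFam [Finite α] (G : Submodule (ZMod 2) (PauliT α)) :
    ∃ g : Fin (Module.finrank (ZMod 2) G) → PauliT α, IsBasisFam G g := by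
  let b := Module.finBasis (ZMod 2) G
  refine ⟨G.subtype ∘ b, b.linearIndependent.map' G.subtype G.ker_subtype, ?_⟩
  rw [Set.range_comp, Submodule.span_image, b.span_eq, Submodule.map_subtype_top]

theorem IsBasisFam.Wgt_le [Fintype α] (hg : IsBasisFam G g) :
    Wgt G ≤ Finset.univ.sup fun i => (wt (g i) : ℕ∞) :=
  iInf_le_of_le r (iInf₂_le g hg)

theorem Wopt_le_Wgt {n k : ℕ} {G : Submodule (ZMod 2) (Pauli n)} (hG : IsStabilizer G)
    (hk : Module.finrank (ZMod 2) G = n - k) : Wopt n k (distG G) ≤ Wgt G :=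
  iInf₂_le G ⟨hG, hk, rfl⟩

end Basis

section Copies

variable {α β κ : Type} (e : β × α ≃ κ)

/-- Pauli strings on `κ`, cut along `e : β × α ≃ κ` into a family of blocks, each a string on
`α`. -/
def blockEquiv : PauliT κ ≃ₗ[ZMod 2] (β → PauliT α) :=
  (LinearEquiv.funCongrLeft (ZMod 2) (ZMod 2 × ZMod 2) e).trans
    (LinearEquiv.curry (ZMod 2) (ZMod 2 × ZMod 2) β α)

/-- The string on `κ` whose block at `b` is the given one and whose other blocks are trivial. -/
def inBlock (b : β) : PauliT α →ₗ[ZMod 2] PauliT κ :=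
  (blockEquiv e).symm.toLinearMap ∘ₗ LinearMap.single (ZMod 2) (fun _ => PauliT α) b

/-- The tensor product of copies of the stabilizer group `C`, one on each block of `e`. -/
def copies (C : Submodule (ZMod 2) (PauliT α)) : Submodule (ZMod 2) (PauliT κ) :=
  (Submodule.pi Set.univ fun _ => C).comap (blockEquiv e).toLinearMap

variable {C : Submodule (ZMod 2) (PauliT α)}

theorem blockEquiv_inBlock (b : β) (c : PauliT α) :
    blockEquiv e (inBlock e b c) = Pi.single b c :=
  (blockEquiv e).apply_symm_apply _

theorem mem_copies {v : PauliT κ} : v ∈ copies e C ↔ ∀ b, blockEquiv e v b ∈ C := by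
  simp [copies]

theorem inBlock_mem_copies {b : β} {c : PauliT α} : inBlock e b c ∈ copies e C ↔ c ∈ C := by
  rw [mem_copies, blockEquiv_inBlock]
  refine ⟨fun h => by simpa using h b, fun hc b' => ?_⟩
  rcases eq_or_ne b' b with rfl | hb
  · simpa using hc
  · simp [hb]

theorem copies_eq_iSup_map_inBlock [Finite β] : copies e C = ⨆ b, C.map (inBlock e b) := by
  cases nonempty_fintype β
  simp_rw [inBlock, Submodule.map_comp, ← Submodule.map_iSup, Submodule.iSup_map_single]
  exact Submodule.comap_equiv_eq_map_symm ..

theorem IsBasisFam.copies [Finite β] {r s : ℕ} {g : Fin r → PauliT α} (hg : IsBasisFam C g)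
    (f : Fin s ≃ Σ _ : β, Fin r) :
    IsBasisFam (copies e C) fun t => inBlock e (f t).1 (g (f t).2) := by
  constructor
  · have hsingle := Pi.linearIndependent_single (fun _ : β => g) fun _ => hg.1
    exact (hsingle.map' _ (blockEquiv e).symm.ker).comp f f.injective
  · have hrange : Set.range (fun t => inBlock e (f t).1 (g (f t).2)) =
        ⋃ b, inBlock e b '' Set.range g := by
      refine (f.surjective.range_comp fun x => inBlock e x.1 (g x.2)).trans ?_
      ext v
      simp
    simp_rw [hrange, Submodule.span_iUnion, Submodule.span_image, hg.2,
      copies_eq_iSup_map_inBlock]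

theorem finrank_copies [Finite α] [Fintype β] :
    Module.finrank (ZMod 2) (copies e C) = Fintype.card β * Module.finrank (ZMod 2) C := by
  obtain ⟨g, hg⟩ := exists_isBasisFam C
  rw [(hg.copies e (Fintype.equivFin _).symm).finrank_eq]
  simp

variable [Fintype α] [Fintype κ]

theorem wt_eq_sum_blockEquiv [Fintype β] (v : PauliT κ) :
    wt v = ∑ b, wt (blockEquiv e v b) := by
  simp_rw [wt, Finset.card_filter]
  rw [← e.sum_comp, Fintype.sum_prod_type]
  rfl

theorem sympl_eq_sum_blockEquiv [Fintype β] (u v : PauliT κ) :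
    sympl u v = ∑ b, sympl (blockEquiv e u b) (blockEquiv e v b) := by
  rw [sympl, ← e.sum_comp, Fintype.sum_prod_type]
  rfl

variable [Finite β]

theorem wt_inBlock (b : β) (c : PauliT α) : wt (inBlock e b c) = wt c := by
  cases nonempty_fintype β
  rw [wt_eq_sum_blockEquiv e, blockEquiv_inBlock, Fintype.sum_eq_single b, Pi.single_eq_same]
  intro b' hb
  simp [hb, wt]

theorem wt_blockEquiv_le (v : PauliT κ) (b : β) : wt (blockEquiv e v b) ≤ wt v := by
  cases nonempty_fintype β
  rw [wt_eq_sum_blockEquiv e v]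
  exact Finset.single_le_sum (f := fun b => wt (blockEquiv e v b)) (fun _ _ => Nat.zero_le _)
    (Finset.mem_univ b)

theorem sympl_inBlock_right (v : PauliT κ) (b : β) (c : PauliT α) :
    sympl v (inBlock e b c) = sympl (blockEquiv e v b) c := by
  cases nonempty_fintype β
  rw [sympl_eq_sum_blockEquiv e, blockEquiv_inBlock, Fintype.sum_eq_single b, Pi.single_eq_same]
  intro b' hb
  rw [Pi.single_eq_of_ne hb, sympl_zero_right]

theorem inDual_copies_iff {v : PauliT κ} :
    inDual (copies e C) v ↔ ∀ b, inDual C (blockEquiv e v b) := by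
  cases nonempty_fintype β
  refine ⟨fun hv b c hc => ?_, fun hv g hg => ?_⟩
  · rw [← sympl_inBlock_right]
    exact hv _ ((inBlock_mem_copies e).2 hc)
  · rw [sympl_eq_sum_blockEquiv e]
    exact Finset.sum_eq_zero fun b _ => hv b _ ((mem_copies e).1 hg b)

theorem isStabilizer_copies (hC : IsStabilizer C) : IsStabilizer (copies e C) :=
  fun _ hu => (inDual_copies_iff e).2 fun b => hC _ ((mem_copies e).1 hu b)

theorem isLogical_inBlock {c : PauliT α} (hc : IsLogical C c) (b : β) :
    IsLogical (copies e C) (inBlock e b c) := by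
  refine ⟨fun g hg => ?_, fun h => hc.2 ((inBlock_mem_copies e).1 h)⟩
  rw [sympl_comm, sympl_inBlock_right, sympl_comm]
  exact hc.1 _ ((mem_copies e).1 hg b)

theorem exists_isLogical_blockEquiv {v : PauliT κ} (hv : IsLogical (copies e C) v) :
    ∃ b, IsLogical C (blockEquiv e v b) := by
  obtain ⟨b, hb⟩ : ∃ b, blockEquiv e v b ∉ C := not_forall.1 fun h => hv.2 ((mem_copies e).2 h)
  exact ⟨b, (inDual_copies_iff e).1 hv.1 b, hb⟩

theorem distG_copies [Nonempty β] : distG (copies e C) = distG C := by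
  refine le_antisymm (le_distG_iff.2 fun c hc => ?_) (le_distG_iff.2 fun v hv => ?_)
  · obtain ⟨b⟩ := ‹Nonempty β›
    exact wt_inBlock e b c ▸ (isLogical_inBlock e hc b).distG_le
  · obtain ⟨b, hb⟩ := exists_isLogical_blockEquiv e hv
    exact hb.distG_le.trans (by exact_mod_cast wt_blockEquiv_le e v b)

theorem Wgt_copies_le : Wgt (copies e C) ≤ Wgt C := by
  cases nonempty_fintype β
  refine le_iInf fun r => le_iInf₂ fun g hg => ?_
  refine (hg.copies e (Fintype.equivFin _).symm).Wgt_le.trans (Finset.sup_le fun t _ => ?_)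
  rw [wt_inBlock]
  exact Finset.le_sup (f := fun i => (wt (g i) : ℕ∞)) (Finset.mem_univ _)

theorem Wopt_mul_le (n k : ℕ) (d : ℕ∞) {m : ℕ} (hm : m ≠ 0) :
    Wopt (m * n) (m * k) d ≤ Wopt n k d := by
  refine le_iInf₂ fun C hC => ?_
  obtain ⟨hstab, hk, rfl⟩ := hC
  have : NeZero m := ⟨hm⟩
  calc Wopt (m * n) (m * k) (distG C)
      = Wopt (m * n) (m * k) (distG (copies finProdFinEquiv C)) := by rw [distG_copies]
    _ ≤ Wgt (copies finProdFinEquiv C) :=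
        Wopt_le_Wgt (isStabilizer_copies _ hstab)
          (by rw [finrank_copies, hk, Fintype.card_fin, Nat.mul_sub])
    _ ≤ Wgt C := Wgt_copies_le _

end Copies

section FourQubitCode

/-- The generators `XXXI`, `YZIX`, `ZIZZ` of a `[[4,1,2;3]]` stabilizer group. A qubit's `X`, `Y`,
`Z` are encoded as `(1, 0)`, `(1, 1)`, `(0, 1)`. -/
def fourQubitGen : Fin 3 → Pauli 4 :=
  ![![(1, 0), (1, 0), (1, 0), 0], ![(1, 1), (0, 1), 0, (1, 0)], ![(0, 1), 0, (0, 1), (0, 1)]]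

/-- The `[[4,1,2;3]]` stabilizer group generated by `fourQubitGen`. -/
def fourQubitCode : Submodule (ZMod 2) (Pauli 4) :=
  Submodule.span (ZMod 2) (Set.range fourQubitGen)

theorem linearIndependent_fourQubitGen : LinearIndependent (ZMod 2) fourQubitGen := by
  refine Fintype.linearIndependent_iff.2 fun f hf => ?_
  have hsite1 : f 0 = 0 ∧ f 1 = 0 := by
    simpa [fourQubitGen, Fin.sum_univ_three] using congrFun hf 1
  have hsite2 : f 0 = 0 ∧ f 2 = 0 := by
    simpa [fourQubitGen, Fin.sum_univ_three] using congrFun hf 2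
  exact Fin.forall_fin_succ.2 ⟨hsite1.1, Fin.forall_fin_two.2 ⟨hsite1.2, hsite2.2⟩⟩

theorem isBasisFam_fourQubitGen : IsBasisFam fourQubitCode fourQubitGen :=
  ⟨linearIndependent_fourQubitGen, rfl⟩

theorem isStabilizer_fourQubitCode : IsStabilizer fourQubitCode := by
  refine isStabilizer_span (Set.forall_mem_range.2 fun a => Set.forall_mem_range.2 fun b => ?_)
  rw [sympl, Fin.sum_univ_four]
  revert a b
  decide

/-- The logical operator `ZYII` of `fourQubitCode`. -/
def fourQubitLogical : Pauli 4 := ![(0, 1), (1, 1), 0, 0]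

theorem isLogical_fourQubitLogical : IsLogical fourQubitCode fourQubitLogical := by
  have hdual {v : Pauli 4} (hv : ∀ a, sympl v (fourQubitGen a) = 0) : inDual fourQubitCode v :=
    inDual_span_iff.2 (Set.forall_mem_range.2 hv)
  -- `YIYI` is the logical operator conjugate to `ZYII`.
  refine isLogical_of_sympl_ne_zero (u := ![(1, 1), 0, (1, 1), 0])
    (hdual fun a => ?_) (hdual fun a => ?_) ?_ <;> rw [sympl, Fin.sum_univ_four]
  · revert a
    decide
  · revert a
    decide
  · decide

theorem distG_fourQubitCode : distG fourQubitCode = 2 := by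
  refine le_antisymm (isLogical_fourQubitLogical.distG_le.trans ?_) (two_le_distG_span ?_)
  · have hwt : wt fourQubitLogical ≤ 2 := wt_le_card (T := {0, 1}) (by decide)
    exact_mod_cast hwt
  · simp_rw [Set.forall_mem_range]
    decide

theorem wt_fourQubitGen_le (a : Fin 3) : wt (fourQubitGen a) ≤ 3 := by
  obtain ⟨i, hi⟩ : ∃ i, fourQubitGen a i = 0 := by
    revert a
    decide
  exact (wt_le_card (T := Finset.univ.erase i) (by simpa using hi)).trans_eq (by simp)

theorem Wopt_four_one_two_le_three : Wopt 4 1 2 ≤ 3 := by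
  have hk : Module.finrank (ZMod 2) fourQubitCode = 4 - 1 := isBasisFam_fourQubitGen.finrank_eq
  calc Wopt 4 1 2 = Wopt 4 1 (distG fourQubitCode) := by rw [distG_fourQubitCode]
    _ ≤ Wgt fourQubitCode := Wopt_le_Wgt isStabilizer_fourQubitCode hk
    _ ≤ Finset.univ.sup fun a => (wt (fourQubitGen a) : ℕ∞) := isBasisFam_fourQubitGen.Wgt_le
    _ ≤ 3 := Finset.sup_le fun a _ => by exact_mod_cast wt_fourQubitGen_le a

end FourQubitCode

/-- for every `k ≥ 1`, `W_opt(n,k,2) ≥ 3` for all `n`, equality is attained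
at `n = 4k`, and hence the minimum over all blocklengths of `W_opt(n,k,2)` is `3`. -/
theorem min_Wopt_distance_two (k : ℕ) (hk : 1 ≤ k) :
    (∀ n : ℕ, 3 ≤ Wopt n k 2) ∧
    Wopt (4 * k) k 2 = 3 ∧
    (⨅ n : ℕ, Wopt n k 2) = 3 := by
  have hlower (n : ℕ) : 3 ≤ Wopt n k 2 := three_le_Wopt n k le_rfl (by decide)
  have hupper : Wopt (4 * k) k 2 ≤ 3 :=
    calc Wopt (4 * k) k 2 = Wopt (k * 4) (k * 1) 2 := by rw [mul_comm, mul_one]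
      _ ≤ Wopt 4 1 2 := Wopt_mul_le 4 1 2 (Nat.one_le_iff_ne_zero.1 hk)
      _ ≤ 3 := Wopt_four_one_two_le_three
  exact ⟨hlower, hupper.antisymm (hlower _),
    ((iInf_le _ (4 * k)).trans hupper).antisymm (le_iInf hlower)⟩

end
end

section
/- Every stabilizer group G ⊆ P_n (indeed every 𝔽₂-subspace of P_n) admits a weight-optimal generating set: there is an 𝔽₂-basis g_1, …, g_r of G with wt(g_1) ≤ … ≤ wt(g_r) such that for every 𝔽₂-basis h_1, …, h_r of G ordered with wt(h_1) ≤ … ≤ wt(h_r), one has wt(g_i) ≤ wt(h_i) for all i = 1, …, r. -/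
open scoped Classical

noncomputable section

variable {ι : Type} [Fintype ι]

/-!
Choose `g i` to be an element of minimal weight among the elements of `G` outside the span of
the earlier choices; the weights increase because the set of candidates only shrinks. Given
linearly independent `h 0, …, h i` in `G` of increasing weight, the span of `g 0, …, g (i - 1)`
has dimension at most `i`, so it misses some `h j` with `j ≤ i`; this `h j` was a candidate for
`g i`, so `wt (g i) ≤ wt (h j) ≤ wt (h i)`.
-/

open Module Submodule

section GreedyFamily

variable {K V κ α : Type*} [DivisionRing K] [AddCommGroup V] [Module K V]

theorem not_le_span_of_card_lt_finrank {W : Submodule K V} {t : Finset V}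
    (ht : t.card < finrank K W) : ¬ W ≤ span K (t : Set V) := fun hW ↦
  ht.not_ge ((finrank_mono hW).trans (finrank_span_finset_le_card t))

theorem exists_mem_notMem_span_of_card_lt {h : κ → V} {s : Finset κ}
    (hh : LinearIndepOn K h (s : Set κ)) {t : Finset V} (hts : t.card < s.card) :
    ∃ j ∈ s, h j ∉ span K (t : Set V) := by
  by_contra! hmem
  have hcard : t.card < finrank K (span K (Set.range fun j : s ↦ h j)) :=
    hts.trans_eq ((finrank_span_eq_card hh).trans (Fintype.card_coe s)).symm
  exact not_le_span_of_card_lt_finrank hcard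
    (span_le.2 (Set.range_subset_iff.2 fun j ↦ hmem j j.2))

theorem linearIndependent_of_notMem_span_image_Iio [LinearOrder κ] {g : κ → V}
    (hg : ∀ i, g i ∉ span K (g '' Set.Iio i)) : LinearIndependent K g := by
  refine linearIndependent_iff_finset_linearIndependent.2 fun s ↦ ?_
  change LinearIndepOn K g (s : Set κ)
  induction s using Finset.induction_on_max with
  | empty => simp only [Finset.coe_empty, linearIndepOn_empty]
  | insert a s has ih =>
    rw [Finset.coe_insert]
    exact ih.insert fun ha ↦ hg a (span_mono (Set.image_mono has) ha)

theorem exists_forall_eq_image_Iio [Preorder κ] [WellFoundedLT κ] {β : Type*} (f : Set β → β) :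
    ∃ g : κ → β, ∀ i, g i = f (g '' Set.Iio i) := by
  refine ⟨wellFounded_lt.fix fun i g ↦ f (Set.range fun j : Set.Iio i ↦ g j j.2), fun i ↦ ?_⟩
  rw [WellFounded.fix_eq, Set.image_eq_range]

/-- A family in the subspace `W` obtained by the greedy algorithm for the weight `w`: each term
is an element of `W` of minimal weight among those outside the span of the preceding terms. -/
def IsGreedyFamily [Preorder κ] [LE α] (w : V → α) (W : Submodule K V) (g : κ → V) : Prop :=
  ∀ i, MinimalFor (fun v ↦ v ∈ W ∧ v ∉ span K (g '' Set.Iio i)) w (g i)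

theorem exists_isGreedyFamily [Preorder κ] [LocallyFiniteOrderBot κ] [Preorder α]
    [WellFoundedLT α] (w : V → α) (W : Submodule K V)
    (hκ : ∀ i : κ, (Finset.Iio i).card < finrank K W) :
    ∃ g : κ → V, IsGreedyFamily w W g := by
  have : WellFoundedLT κ :=
    StrictMono.wellFoundedLT (f := fun i : κ ↦ (Finset.Iio i).card)
      fun _ _ hij ↦ Finset.card_lt_card (Finset.Iio_ssubset_Iio hij)
  have hmin (t : Set V) (ht : ¬ W ≤ span K t) :
      ∃ v, MinimalFor (fun v ↦ v ∈ W ∧ v ∉ span K t) w v :=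
    exists_minimalFor_of_wellFoundedLT _ w (SetLike.not_le_iff_exists.1 ht)
  choose! f hf using hmin
  obtain ⟨g, hg⟩ := exists_forall_eq_image_Iio (κ := κ) f
  refine ⟨g, fun i ↦ ?_⟩
  rw [hg i]
  refine hf _ ?_
  have hcard : ((Finset.Iio i).image g).card < finrank K W :=
    Finset.card_image_le.trans_lt (hκ i)
  simpa only [Finset.coe_image, Finset.coe_Iio] using not_le_span_of_card_lt_finrank hcard

namespace IsGreedyFamily

variable {W : Submodule K V} {w : V → α} {g : κ → V}

theorem mem [Preorder κ] [LE α] (hg : IsGreedyFamily w W g) (i : κ) : g i ∈ W :=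
  (hg i).prop.1

theorem notMem_span [Preorder κ] [LE α] (hg : IsGreedyFamily w W g) (i : κ) :
    g i ∉ span K (g '' Set.Iio i) :=
  (hg i).prop.2

theorem linearIndependent [LinearOrder κ] [LE α] (hg : IsGreedyFamily w W g) :
    LinearIndependent K g :=
  linearIndependent_of_notMem_span_image_Iio hg.notMem_span

theorem span_range_eq [LinearOrder κ] [Fintype κ] [LE α] [FiniteDimensional K W]
    (hg : IsGreedyFamily w W g) (hκ : Fintype.card κ = finrank K W) :
    span K (Set.range g) = W :=
  eq_of_le_of_finrank_eq (span_le.2 (Set.range_subset_iff.2 hg.mem))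
    ((finrank_span_eq_card hg.linearIndependent).trans hκ)

variable [LinearOrder α]

theorem monotone [Preorder κ] (hg : IsGreedyFamily w W g) : Monotone fun i ↦ w (g i) := by
  intro i j hij
  have hsub : g '' Set.Iio i ⊆ g '' Set.Iio j := Set.image_mono (Set.Iio_subset_Iio hij)
  exact (hg i).le ⟨hg.mem j, fun hj ↦ hg.notMem_span j (span_mono hsub hj)⟩

theorem le_of_linearIndependent [Preorder κ] [LocallyFiniteOrderBot κ]
    (hg : IsGreedyFamily w W g) {h : κ → V} (hh : LinearIndependent K h)
    (hW : ∀ i, h i ∈ W) (hmono : Monotone fun i ↦ w (h i)) (i : κ) : w (g i) ≤ w (h i) := by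
  have hssub : Finset.Iio i ⊂ Finset.Iic i :=
    (Finset.ssubset_iff_of_subset Finset.Iio_subset_Iic_self).2
      ⟨i, Finset.mem_Iic.2 le_rfl, fun hi ↦ (Finset.mem_Iio.1 hi).false⟩
  have hcard : ((Finset.Iio i).image g).card < (Finset.Iic i).card :=
    Finset.card_image_le.trans_lt (Finset.card_lt_card hssub)
  obtain ⟨j, hji, hj⟩ := exists_mem_notMem_span_of_card_lt
    (hh.linearIndepOn (Finset.Iic i : Set κ)) hcard
  rw [Finset.coe_image, Finset.coe_Iio] at hj
  calc w (g i) ≤ w (h j) := (hg i).le ⟨hW j, hj⟩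
    _ ≤ w (h i) := hmono (Finset.mem_Iic.1 hji)

end IsGreedyFamily

theorem exists_weightOptimal_basis_general [LinearOrder α] [WellFoundedLT α] (w : V → α)
    (W : Submodule K V) [FiniteDimensional K W] :
    ∃ g : Fin (finrank K W) → V,
      (LinearIndependent K g ∧ span K (Set.range g) = W) ∧ Monotone (fun i ↦ w (g i)) ∧
        ∀ h : Fin (finrank K W) → V, LinearIndependent K h → (∀ i, h i ∈ W) →
          Monotone (fun i ↦ w (h i)) → ∀ i, w (g i) ≤ w (h i) := by
  obtain ⟨g, hg⟩ := exists_isGreedyFamily (κ := Fin (finrank K W)) w W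
    fun i ↦ (Fin.card_Iio i).trans_lt i.is_lt
  exact ⟨g, ⟨hg.linearIndependent, hg.span_range_eq (Fintype.card_fin _)⟩, hg.monotone,
    fun _ hh hW hmono ↦ hg.le_of_linearIndependent hh hW hmono⟩

end GreedyFamily

/-- every `𝔽₂`-subspace of `P_n` admits a weight-optimal generating set. -/
theorem exists_weightOptimal_basis (n : ℕ) (G : Submodule (ZMod 2) (Pauli n)) :
    ∃ g : Fin (Module.finrank (ZMod 2) ↥G) → Pauli n, IsWeightOptimalBasis G g := by
  obtain ⟨g, hbasis, hmono, hle⟩ := exists_weightOptimal_basis_general wt G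
  exact ⟨g, hbasis, hmono, fun h hh ↦ hle h hh.1 fun i ↦ hh.2.le (subset_span ⟨i, rfl⟩)⟩

end
end
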